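/- Let P be a Poisson algebra over a field k and V a 1-dimensional vector space with basis {x}. Then there is a bijection between the set PS(P,V) of all crossed systems of P by V and the disjoint union F(P) = AF(P) ⊔ NF(P) of the set of abelian co-flag data and the set of non-abelian co-flag data of P. Under this bijection, the crossed system corresponding to (λ, Λ, θ, γ, f) ∈ AF(P) is given by p⇀x = λ(p)x, x◁p = Λ(p)x, ϑ(p,q) = θ(p,q)x, x·_V x = 0, [x,x]_V = 0, p▷x = γ(p)x, f(p,q) = f(p,q)x; and the crossed system corresponding to (λ, θ, u) ∈ NF(P) is given by p⇀x = λ(p)x, x◁p = λ(p)x, ϑ(p,q) = θ(p,q)x, x·_V x = u x, p▷x = 0, f(p,q) = −u⁻¹ λ([p,q]) x, [x,x]_V = 0. -/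

import Mathlib

/-!
Since `V = k` is one-dimensional, the maps `⇀`, `◁`, `▷`, `·_V` of a pre-crossed datum are
multiplications by scalars `λ(p)`, `Λ(p)`, `γ(p)`, `u`, and `[-,-]_V` vanishes because it is
alternating (`crossed_eq_scalar`). For such a scalar datum the Poisson axioms of `P ♯ V` become
the scalar identities `ScalarAxioms`: each is the value of one Poisson axiom on elements of the
form `(p, 0)` and `(0, 1)`, and conversely each Poisson axiom is a linear combination of them
(`isCrossedSystem_scalar_iff`).

If `u = 0` these identities are the axioms of an abelian co-flag datum. If `u ≠ 0`, they force
`Λ = λ`, `γ = 0` and `f(p,q) = -u⁻¹ λ([p,q])`, and only (NF1) and (NF2) remain: the conditions on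
the bracket follow from the Jacobi and Leibniz identities of `P` on applying `λ`.
-/

universe u

section Defs

variable (k : Type u) [Field k]

/-- A map in two variables is `k`-bilinear. -/
def IsBilin {A B C : Type u} [AddCommGroup A] [Module k A] [AddCommGroup B] [Module k B]
    [AddCommGroup C] [Module k C] (f : A → B → C) : Prop :=
  (∀ a a' b, f (a + a') b = f a b + f a' b) ∧
  (∀ (c : k) (a b), f (c • a) b = c • f a b) ∧
  (∀ a b b', f a (b + b') = f a b + f a b') ∧
  (∀ (c : k) (a b), f a (c • b) = c • f a b)

/-- `(A, mul, br)` is a (not necessarily commutative or unital) Poisson algebra over `k`: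
`mul` is a bilinear associative multiplication, `br` is a Lie bracket and the
Leibniz law `[ab, c] = [a,c]b + a[b,c]` holds. -/
structure IsPoisson {A : Type u} [AddCommGroup A] [Module k A]
    (mul br : A → A → A) : Prop where
  mul_bilin : IsBilin k mul
  br_bilin : IsBilin k br
  mul_assoc : ∀ a b c, mul (mul a b) c = mul a (mul b c)
  br_alt : ∀ a, br a a = 0
  jacobi : ∀ a b c, br (br a b) c + br (br b c) a + br (br c a) b = 0
  leibniz : ∀ a b c, br (mul a b) c = mul (br a c) b + mul a (br b c)

variable (P V : Type u) [AddCommGroup P] [Module k P] [AddCommGroup V] [Module k V]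

/-- A pre-crossed datum `Ω(P,V) = (⇀, ◁, ϑ, ·_V, ▷, f, [-,-]_V)` of a Poisson algebra `P`
by a vector space `V`:  seven bilinear maps.  Here `hl = ⇀`, `hr = ◁`, `theta = ϑ`,
`mulV = ·_V`, `lact = ▷`, `cf = f` and `brV = [-,-]_V`. -/
structure PreCrossedDatum where
  hl : P → V → V
  hr : V → P → V
  theta : P → P → V
  mulV : V → V → V
  lact : P → V → V
  cf : P → P → V
  brV : V → V → V
  hl_bilin : IsBilin k hl
  hr_bilin : IsBilin k hr
  theta_bilin : IsBilin k theta
  mulV_bilin : IsBilin k mulV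
  lact_bilin : IsBilin k lact
  cf_bilin : IsBilin k cf
  brV_bilin : IsBilin k brV

variable {k P V}

/-- The multiplication `(p,x) ⋆ (q,y) = (pq, ϑ(p,q) + p⇀y + x◁q + x·y)` of `P ♯ V`. -/
def sharpMul (mulP : P → P → P) (Om : PreCrossedDatum k P V) :
    P × V → P × V → P × V :=
  fun a b => (mulP a.1 b.1,
    Om.theta a.1 b.1 + Om.hl a.1 b.2 + Om.hr a.2 b.1 + Om.mulV a.2 b.2)

/-- The bracket `{(p,x), (q,y)} = ([p,q], f(p,q) + p▷y − q▷x + [x,y]_V)` of `P ♯ V`. -/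
def sharpBr (brP : P → P → P) (Om : PreCrossedDatum k P V) :
    P × V → P × V → P × V :=
  fun a b => (brP a.1 b.1,
    Om.cf a.1 b.1 + Om.lact a.1 b.2 - Om.lact b.1 a.2 + Om.brV a.2 b.2)

/-- A pre-crossed datum is a crossed system when `P ♯ V` is a Poisson algebra. -/
def IsCrossedSystem (mulP brP : P → P → P) (Om : PreCrossedDatum k P V) : Prop :=
  IsPoisson k (sharpMul mulP Om) (sharpBr brP Om)

end Defs

section Coflag

variable (k P : Type u) [Field k] [AddCommGroup P] [Module k P]

/-- An abelian co-flag datum `(λ, Λ, θ, γ, f)` of the Poisson algebra `(P, mulP, brP)`,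
satisfying the axioms (AF1)-(AF7). -/
structure AbCoflagDatum (mulP brP : P → P → P) where
  lam : P →ₗ[k] k
  Lam : P →ₗ[k] k
  theta : P → P → k
  gam : P →ₗ[k] k
  f : P → P → k
  theta_bilin : IsBilin k theta
  f_bilin : IsBilin k f
  -- (AF1)
  af1lam : ∀ p q, lam (mulP p q) = lam p * lam q
  af1Lam : ∀ p q, Lam (mulP p q) = Lam p * Lam q
  -- (AF2)
  af2 : ∀ p q r, theta p (mulP q r) - theta (mulP p q) r = theta p q * Lam r - theta q r * lam p
  -- (AF3)
  af3f : ∀ p, f p p = 0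
  af3gam : ∀ p q, gam (brP p q) = 0
  -- (AF4)
  af4 : ∀ p q r, f p (brP q r) + f q (brP r p) + f r (brP p q)
      + gam p * f q r + gam q * f r p + gam r * f p q = 0
  -- (AF5)
  af5 : ∀ p q r, f (mulP p q) r - Lam q * f p r - lam p * f q r
      = gam r * theta p q + theta (brP p r) q + theta p (brP q r)
  -- (AF6)
  af6 : ∀ p q, gam (mulP p q) = gam p * Lam q + lam p * gam q
  -- (AF7)
  af7lam : ∀ p q, lam (brP p q) = 0
  af7Lam : ∀ p q, Lam (brP p q) = 0

/-- A non-abelian co-flag datum `(λ, θ, u)` of `(P, mulP, brP)`, with `u ≠ 0`, satisfying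
(NF1) and (NF2). -/
structure NAbCoflagDatum (mulP brP : P → P → P) where
  lam : P →ₗ[k] k
  theta : P → P → k
  u : k
  u_ne : u ≠ 0
  theta_bilin : IsBilin k theta
  -- (NF1)
  nf1 : ∀ p q, lam (mulP p q) = lam p * lam q - u * theta p q
  -- (NF2)
  nf2 : ∀ p q r, theta p (mulP q r) - theta (mulP p q) r = theta p q * lam r - theta q r * lam p

end Coflag

section Scalar

variable {k P : Type u} [Field k] [AddCommGroup P] [Module k P]

theorem IsBilin.zero_left {A B C : Type u} [AddCommGroup A] [Module k A] [AddCommGroup B]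
    [Module k B] [AddCommGroup C] [Module k C] {f : A → B → C} (h : IsBilin k f) (b : B) :
    f 0 b = 0 := by
  have := h.2.1 0 0 b
  simpa using this

theorem IsBilin.zero_right {A B C : Type u} [AddCommGroup A] [Module k A] [AddCommGroup B]
    [Module k B] [AddCommGroup C] [Module k C] {f : A → B → C} (h : IsBilin k f) (a : A) :
    f a 0 = 0 := by
  have := h.2.2.2 0 a 0
  simpa using this

/-- An alternating bilinear map is antisymmetric. -/
theorem IsBilin.antisymm {A C : Type u} [AddCommGroup A] [Module k A]
    [AddCommGroup C] [Module k C] {f : A → A → C} (h : IsBilin k f)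
    (halt : ∀ a, f a a = 0) (a b : A) : f a b = -f b a := by
  have := halt (a + b)
  rw [h.1, h.2.2.1, h.2.2.1, halt, halt, zero_add, add_zero] at this
  exact eq_neg_of_add_eq_zero_left this

/-- The pre-crossed datum of `P` by `k` with `p⇀x = λ(p)x`, `x◁p = Λ(p)x`, `p▷x = γ(p)x`,
`x·_V y = uxy`, `[-,-]_V = 0` and cocycles `θ`, `f`. -/
def scalarDatum (lam Lam gam : P →ₗ[k] k) (theta f : P → P → k) (u : k)
    (ht : IsBilin k theta) (hf : IsBilin k f) : PreCrossedDatum k P k where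
  hl := fun p x => lam p * x
  hr := fun x p => Lam p * x
  theta := theta
  mulV := fun x y => u * (x * y)
  lact := fun p x => gam p * x
  cf := f
  brV := fun _ _ => 0
  hl_bilin := by refine ⟨?_, ?_, ?_, ?_⟩ <;> intros <;> simp <;> ring
  hr_bilin := by refine ⟨?_, ?_, ?_, ?_⟩ <;> intros <;> simp <;> ring
  theta_bilin := ht
  mulV_bilin := by refine ⟨?_, ?_, ?_, ?_⟩ <;> intros <;> simp <;> ring
  lact_bilin := by refine ⟨?_, ?_, ?_, ?_⟩ <;> intros <;> simp <;> ring
  cf_bilin := hf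
  brV_bilin := by refine ⟨?_, ?_, ?_, ?_⟩ <;> intros <;> simp

/-- The scalar identities expressing that `scalarDatum` is a crossed system. For `u = 0` they
specialise to the axioms of an abelian co-flag datum. -/
structure ScalarAxioms (mulP brP : P → P → P) (lam Lam gam : P →ₗ[k] k)
    (theta f : P → P → k) (u : k) : Prop where
  lam_mul : ∀ p q, lam (mulP p q) = lam p * lam q - u * theta p q
  Lam_mul : ∀ p q, Lam (mulP p q) = Lam p * Lam q - u * theta p q
  cocycle : ∀ p q r,
    theta p (mulP q r) - theta (mulP p q) r = theta p q * Lam r - theta q r * lam p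
  u_lam : ∀ p, u * lam p = u * Lam p
  f_alt : ∀ p, f p p = 0
  gam_br : ∀ p q, gam (brP p q) = 0
  jac : ∀ p q r, f p (brP q r) + f q (brP r p) + f r (brP p q)
      + gam p * f q r + gam q * f r p + gam r * f p q = 0
  leib : ∀ p q r, f (mulP p q) r - Lam q * f p r - lam p * f q r
      = gam r * theta p q + theta (brP p r) q + theta p (brP q r)
  gam_mul : ∀ p q, gam (mulP p q) = gam p * Lam q + lam p * gam q
  lam_br : ∀ p q, lam (brP p q) = -(u * f p q)
  Lam_br : ∀ p q, Lam (brP p q) = -(u * f p q)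
  u_gam : ∀ p, u * gam p = 0

set_option linter.unusedSimpArgs false in
theorem isCrossedSystem_scalar_iff {mulP brP : P → P → P} (hP : IsPoisson k mulP brP)
    (lam Lam gam : P →ₗ[k] k) (theta f : P → P → k) (u : k)
    (ht : IsBilin k theta) (hf : IsBilin k f) :
    IsCrossedSystem mulP brP (scalarDatum lam Lam gam theta f u ht hf) ↔
      ScalarAxioms mulP brP lam Lam gam theta f u := by
  have m0l := hP.mul_bilin.zero_left
  have m0r := hP.mul_bilin.zero_right
  have b0l := hP.br_bilin.zero_left
  have b0r := hP.br_bilin.zero_right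
  have t0l := ht.zero_left
  have t0r := ht.zero_right
  have f0l := hf.zero_left
  have f0r := hf.zero_right
  constructor
  · intro h
    have ass := fun a b c => congrArg Prod.snd (h.mul_assoc a b c)
    have alt := fun a => congrArg Prod.snd (h.br_alt a)
    have jac := fun a b c => congrArg Prod.snd (h.jacobi a b c)
    have lei := fun a b c => congrArg Prod.snd (h.leibniz a b c)
    simp only [sharpMul, sharpBr, scalarDatum, Prod.snd_add, Prod.snd_zero] at ass alt jac lei
    have f_alt : ∀ p, f p p = 0 := fun p => by simpa using alt (p, 0)
    have f_anti := hf.antisymm f_alt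
    refine ⟨fun p q => ?_, fun p q => ?_, fun p q r => ?_, fun p => ?_, f_alt, fun p q => ?_,
      fun p q r => ?_, fun p q r => ?_, fun p q => ?_, fun p q => ?_, fun p q => ?_, fun p => ?_⟩
    · have := ass (p, 0) (q, 0) (0, 1)
      simp [m0l, m0r, b0l, b0r, t0l, t0r, f0l, f0r] at this
      linear_combination this
    · have := ass (0, 1) (p, 0) (q, 0)
      simp [m0l, m0r, b0l, b0r, t0l, t0r, f0l, f0r] at this
      linear_combination -this
    · have := ass (p, 0) (q, 0) (r, 0)
      simp at this
      linear_combination -this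
    · have := ass (0, 1) (p, 0) (0, 1)
      simp only [m0l, m0r, b0l, b0r, t0l, t0r, f0l, f0r, map_zero] at this
      linear_combination -this
    · have := jac (p, 0) (q, 0) (0, 1)
      simp only [m0l, m0r, b0l, b0r, t0l, t0r, f0l, f0r, map_zero] at this
      linear_combination this
    · have := jac (p, 0) (q, 0) (r, 0)
      simp only [f_anti (brP _ _)] at this
      linear_combination -this
    · have := lei (p, 0) (q, 0) (r, 0)
      linear_combination this
    · have := lei (p, 0) (q, 0) (0, 1)
      simp only [m0l, m0r, b0l, b0r, t0l, t0r, f0l, f0r, map_zero] at this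
      linear_combination this
    · have := lei (p, 0) (0, 1) (q, 0)
      simp only [m0l, m0r, b0l, b0r, t0l, t0r, f0l, f0r, map_zero] at this
      linear_combination -this
    · have := lei (0, 1) (p, 0) (q, 0)
      simp only [m0l, m0r, b0l, b0r, t0l, t0r, f0l, f0r, map_zero] at this
      linear_combination -this
    · have := lei (0, 1) (0, 1) (p, 0)
      simp only [m0l, m0r, b0l, b0r, t0l, t0r, f0l, f0r, map_zero] at this
      linear_combination this
  · intro h
    have f_anti := hf.antisymm h.f_alt
    obtain ⟨ma, ms, ma', ms'⟩ := hP.mul_bilin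
    obtain ⟨ba, bs, ba', bs'⟩ := hP.br_bilin
    obtain ⟨ta, ts, ta', ts'⟩ := ht
    obtain ⟨fa, fs, fa', fs'⟩ := hf
    refine ⟨?_, ?_, ?_, ?_, ?_, ?_⟩
    · refine ⟨?_, ?_, ?_, ?_⟩ <;> intros <;>
        simp [sharpMul, scalarDatum, ma, ms, ma', ms', ta, ts, ta', ts'] <;> ring
    · refine ⟨?_, ?_, ?_, ?_⟩ <;> intros <;>
        simp [sharpBr, scalarDatum, ba, bs, ba', bs', fa, fs, fa', fs'] <;> ring
    · rintro ⟨p, x⟩ ⟨q, y⟩ ⟨r, z⟩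
      refine Prod.ext (hP.mul_assoc p q r) ?_
      simp only [sharpMul, scalarDatum]
      linear_combination z * h.lam_mul p q - x * h.Lam_mul q r - h.cocycle p q r
        - x * z * h.u_lam q
    · rintro ⟨p, x⟩
      refine Prod.ext (hP.br_alt p) ?_
      simp [sharpBr, scalarDatum, h.f_alt]
    · rintro ⟨p, x⟩ ⟨q, y⟩ ⟨r, z⟩
      refine Prod.ext (hP.jacobi p q r) ?_
      simp only [sharpBr, scalarDatum, Prod.snd_add, Prod.snd_zero, f_anti (brP _ _), h.gam_br]
      linear_combination -h.jac p q r
    · rintro ⟨p, x⟩ ⟨q, y⟩ ⟨r, z⟩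
      refine Prod.ext (hP.leibniz p q r) ?_
      simp only [sharpMul, sharpBr, scalarDatum, Prod.snd_add]
      linear_combination h.leib p q r + z * h.gam_mul p q - y * h.lam_br p r
        - x * h.Lam_br q r
        + x * y * h.u_gam r - y * z * h.u_gam p - x * z * h.u_gam q

theorem PreCrossedDatum.eq_of_maps {V : Type u} [AddCommGroup V] [Module k V]
    {A B : PreCrossedDatum k P V} (h1 : A.hl = B.hl) (h2 : A.hr = B.hr)
    (h3 : A.theta = B.theta) (h4 : A.mulV = B.mulV) (h5 : A.lact = B.lact)
    (h6 : A.cf = B.cf) (h7 : A.brV = B.brV) : A = B := by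
  cases A
  cases B
  simp only at h1 h2 h3 h4 h5 h6 h7
  subst h1 h2 h3 h4 h5 h6 h7
  rfl

/-- Every crossed system of `P` by `k` is a scalar datum. -/
theorem crossed_eq_scalar {mulP brP : P → P → P}
    (Om : PreCrossedDatum k P k) (h : IsCrossedSystem mulP brP Om) :
    ∃ (lam Lam gam : P →ₗ[k] k) (u : k),
      Om = scalarDatum lam Lam gam Om.theta Om.cf u Om.theta_bilin Om.cf_bilin := by
  have hbr : Om.brV = fun _ _ => 0 := by
    funext x y
    have h1 := congrArg Prod.snd (h.br_alt (0, 1))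
    simp [sharpBr, Om.cf_bilin.zero_left, Om.lact_bilin.zero_left] at h1
    have h2 := Om.brV_bilin.2.1 x 1 y
    have h3 := Om.brV_bilin.2.2.2 y 1 1
    simp only [smul_eq_mul, mul_one] at h2 h3
    rw [h2, h3, h1, mul_zero, mul_zero]
  obtain ⟨hl, hr, theta, mulV, lact, cf, brV, bl, br, bt, bm, ba, bc, bb⟩ := Om
  subst hbr
  refine ⟨⟨⟨fun p => hl p 1, fun p q => bl.1 p q 1⟩, fun c p => bl.2.1 c p 1⟩,
    ⟨⟨fun p => hr 1 p, fun p q => br.2.2.1 1 p q⟩, fun c p => br.2.2.2 c 1 p⟩,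
    ⟨⟨fun p => lact p 1, fun p q => ba.1 p q 1⟩, fun c p => ba.2.1 c p 1⟩, mulV 1 1, ?_⟩
  refine PreCrossedDatum.eq_of_maps ?_ ?_ rfl ?_ ?_ rfl rfl
  · funext p x
    have := bl.2.2.2 x p 1
    simp only [smul_eq_mul, mul_one] at this
    simp [scalarDatum, this, mul_comm]
  · funext x p
    have := br.2.1 x 1 p
    simp only [smul_eq_mul, mul_one] at this
    simp [scalarDatum, this, mul_comm]
  · funext x y
    have h2 := bm.2.1 x 1 y
    have h3 := bm.2.2.2 y 1 1
    simp only [smul_eq_mul, mul_one] at h2 h3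
    simp only [scalarDatum]
    rw [h2, h3]
    ring
  · funext p x
    have := ba.2.2.2 x p 1
    simp only [smul_eq_mul, mul_one] at this
    simp [scalarDatum, this, mul_comm]

theorem AbCoflagDatum.scalarAxioms {mulP brP : P → P → P} (d : AbCoflagDatum k P mulP brP) :
    ScalarAxioms mulP brP d.lam d.Lam d.gam d.theta d.f 0 where
  lam_mul p q := by simp [d.af1lam]
  Lam_mul p q := by simp [d.af1Lam]
  cocycle := d.af2
  u_lam p := by simp
  f_alt := d.af3f
  gam_br := d.af3gam
  jac := d.af4
  leib := d.af5
  gam_mul := d.af6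
  lam_br p q := by simp [d.af7lam]
  Lam_br p q := by simp [d.af7Lam]
  u_gam p := by simp

theorem NAbCoflagDatum.f_bilin {mulP brP : P → P → P} (hP : IsPoisson k mulP brP)
    (d : NAbCoflagDatum k P mulP brP) :
    IsBilin k (fun p q => -(d.u⁻¹ * d.lam (brP p q))) := by
  obtain ⟨ba, bs, ba', bs'⟩ := hP.br_bilin
  refine ⟨?_, ?_, ?_, ?_⟩ <;> intros <;> simp [ba, bs, ba', bs'] <;> ring

theorem NAbCoflagDatum.scalarAxioms {mulP brP : P → P → P} (hP : IsPoisson k mulP brP)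
    (d : NAbCoflagDatum k P mulP brP) :
    ScalarAxioms mulP brP d.lam d.lam 0 d.theta (fun p q => -(d.u⁻¹ * d.lam (brP p q))) d.u := by
  have hu := d.u_ne
  have anti := hP.br_bilin.antisymm hP.br_alt
  have lam_br : ∀ p q, d.lam (brP p q) = -(d.u * -(d.u⁻¹ * d.lam (brP p q))) := fun p q => by
    field_simp
  refine ⟨d.nf1, d.nf1, d.nf2, fun _ => rfl, fun p => by simp [hP.br_alt], fun _ _ => rfl,
    fun p q r => ?_, fun p q r => ?_, fun p q => by simp, lam_br, lam_br, fun p => by simp⟩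
  · have := congrArg d.lam (hP.jacobi p q r)
    simp only [anti (brP _ _), map_add, map_neg, map_zero] at this
    simp only [LinearMap.zero_apply]
    linear_combination d.u⁻¹ * this
  · -- By (NF1), `uθ` measures the failure of `λ` to be multiplicative; the claim is then `λ`
    -- applied to the Leibniz law of `P`.
    have h1 := congrArg d.lam (hP.leibniz p q r)
    rw [map_add, d.nf1, d.nf1] at h1
    simp only [LinearMap.zero_apply]
    field_simp
    linear_combination -h1

theorem ScalarAxioms.of_ne_zero {mulP brP : P → P → P} {lam Lam gam : P →ₗ[k] k}
    {theta f : P → P → k} {u : k} (h : ScalarAxioms mulP brP lam Lam gam theta f u)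
    (hu : u ≠ 0) :
    Lam = lam ∧ gam = 0 ∧ f = fun p q => -(u⁻¹ * lam (brP p q)) := by
  refine ⟨?_, ?_, ?_⟩
  · ext p
    exact (mul_left_cancel₀ hu (h.u_lam p)).symm
  · ext p
    simpa [hu] using h.u_gam p
  · funext p q
    rw [h.lam_br]
    field_simp

/-- The crossed system attached to a co-flag datum. -/
def coflagToCrossed {mulP brP : P → P → P} (hP : IsPoisson k mulP brP) :
    AbCoflagDatum k P mulP brP ⊕ NAbCoflagDatum k P mulP brP →
      {Om : PreCrossedDatum k P k // IsCrossedSystem mulP brP Om}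
  | Sum.inl d => ⟨scalarDatum d.lam d.Lam d.gam d.theta d.f 0 d.theta_bilin d.f_bilin,
      (isCrossedSystem_scalar_iff hP _ _ _ _ _ _ _ _).2 d.scalarAxioms⟩
  | Sum.inr d => ⟨scalarDatum d.lam d.lam 0 d.theta _ d.u d.theta_bilin (d.f_bilin hP),
      (isCrossedSystem_scalar_iff hP _ _ _ _ _ _ _ _).2 (d.scalarAxioms hP)⟩

/-- The scalars `λ`, `Λ`, `γ`, `u` are recovered by evaluating the structure maps at `1`. -/
theorem scalarDatum_inj {lam Lam gam lam' Lam' gam' : P →ₗ[k] k} {theta f theta' f' : P → P → k}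
    {u u' : k} {ht : IsBilin k theta} {hf : IsBilin k f} {ht' : IsBilin k theta'}
    {hf' : IsBilin k f'}
    (h : scalarDatum lam Lam gam theta f u ht hf = scalarDatum lam' Lam' gam' theta' f' u' ht' hf') :
    lam = lam' ∧ Lam = Lam' ∧ gam = gam' ∧ theta = theta' ∧ f = f' ∧ u = u' := by
  have h1 := congrArg PreCrossedDatum.hl h
  have h2 := congrArg PreCrossedDatum.hr h
  have h4 := congrArg PreCrossedDatum.mulV h
  have h5 := congrArg PreCrossedDatum.lact h
  refine ⟨?_, ?_, ?_, congrArg PreCrossedDatum.theta h, congrArg PreCrossedDatum.cf h, ?_⟩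
  · ext p
    simpa [scalarDatum] using congrFun (congrFun h1 p) 1
  · ext p
    simpa [scalarDatum] using congrFun (congrFun h2 1) p
  · ext p
    simpa [scalarDatum] using congrFun (congrFun h5 p) 1
  · simpa [scalarDatum] using congrFun (congrFun h4 1) 1

theorem coflagToCrossed_injective {mulP brP : P → P → P} (hP : IsPoisson k mulP brP) :
    Function.Injective (coflagToCrossed hP) := by
  rintro (d | d) (e | e) h <;> have h := scalarDatum_inj (congrArg Subtype.val h)
  · obtain ⟨h1, h2, h3, h4, h5, -⟩ := h
    cases d
    cases e
    simp only at h1 h2 h3 h4 h5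
    subst h1 h2 h3 h4 h5
    rfl
  · exact absurd h.2.2.2.2.2.symm e.u_ne
  · exact absurd h.2.2.2.2.2 d.u_ne
  · obtain ⟨h1, -, -, h4, -, h6⟩ := h
    cases d
    cases e
    simp only at h1 h4 h6
    subst h1 h4 h6
    rfl

theorem coflagToCrossed_surjective {mulP brP : P → P → P} (hP : IsPoisson k mulP brP) :
    Function.Surjective (coflagToCrossed hP) := by
  rintro ⟨Om, hOm⟩
  obtain ⟨lam, Lam, gam, u, hs⟩ := crossed_eq_scalar Om hOm
  generalize Om.theta = theta, Om.cf = f, Om.theta_bilin = ht, Om.cf_bilin = hf at hs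
  subst hs
  have h := (isCrossedSystem_scalar_iff hP _ _ _ _ _ _ _ _).1 hOm
  by_cases hu : u = 0
  · subst hu
    exact ⟨Sum.inl ⟨lam, Lam, theta, gam, f, ht, hf, by simpa using h.lam_mul,
      by simpa using h.Lam_mul, h.cocycle, h.f_alt, h.gam_br, h.jac, h.leib, h.gam_mul,
      by simpa using h.lam_br, by simpa using h.Lam_br⟩, rfl⟩
  · obtain ⟨rfl, rfl, rfl⟩ := h.of_ne_zero hu
    exact ⟨Sum.inr ⟨Lam, theta, u, hu, ht, h.lam_mul, h.cocycle⟩, rfl⟩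

end Scalar

/-- **Proposition 3.3.**  For a Poisson algebra `P` and a `1`-dimensional vector space `V`
(taken to be `k`, with basis `x = 1`), there is a bijection between the set `PS(P,V)` of all
crossed systems of `P` by `V` and the set `F(P) = AF(P) ⊔ NF(P)` of co-flag data of `P`,
given by the explicit formulas below. -/
theorem statement14 {k P : Type u} [Field k] [AddCommGroup P] [Module k P]
    (mulP brP : P → P → P) (hP : IsPoisson k mulP brP) :
    ∃ F : (AbCoflagDatum k P mulP brP ⊕ NAbCoflagDatum k P mulP brP) ≃
        {Om : PreCrossedDatum k P k // IsCrossedSystem mulP brP Om},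
      (∀ d : AbCoflagDatum k P mulP brP,
        ((F (Sum.inl d)).1.hl = fun p x => d.lam p * x) ∧
        ((F (Sum.inl d)).1.hr = fun x p => d.Lam p * x) ∧
        ((F (Sum.inl d)).1.theta = d.theta) ∧
        ((F (Sum.inl d)).1.mulV = fun _ _ => 0) ∧
        ((F (Sum.inl d)).1.brV = fun _ _ => 0) ∧
        ((F (Sum.inl d)).1.lact = fun p x => d.gam p * x) ∧
        ((F (Sum.inl d)).1.cf = d.f)) ∧
      (∀ d : NAbCoflagDatum k P mulP brP,
        ((F (Sum.inr d)).1.hl = fun p x => d.lam p * x) ∧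
        ((F (Sum.inr d)).1.hr = fun x p => d.lam p * x) ∧
        ((F (Sum.inr d)).1.theta = d.theta) ∧
        ((F (Sum.inr d)).1.mulV = fun x y => d.u * (x * y)) ∧
        ((F (Sum.inr d)).1.brV = fun _ _ => 0) ∧
        ((F (Sum.inr d)).1.lact = fun _ _ => 0) ∧
        ((F (Sum.inr d)).1.cf = fun p q => -(d.u⁻¹ * d.lam (brP p q)))) := by
  refine ⟨Equiv.ofBijective (coflagToCrossed hP)
    ⟨coflagToCrossed_injective hP, coflagToCrossed_surjective hP⟩, fun d => ?_, fun d => ?_⟩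
  · refine ⟨rfl, rfl, rfl, ?_, rfl, rfl, rfl⟩
    funext x y
    exact zero_mul _
  · refine ⟨rfl, rfl, rfl, rfl, rfl, ?_, rfl⟩
    funext p x
    exact zero_mul _
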